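/- (Remark 3.1) Suppose X^n ⊂ ℝ^2 is in general position (no line contains more than 2 of the points) and n ≥ 3. Then the finite sample additional breakdown point of Tukey's halfspace median is ε(T*, X^n) = ⌈n/2⌉ / (n + ⌈n/2⌉). -/

import Mathlib

open scoped RealInnerProductSpace
open MeasureTheory

noncomputable section

/-- `E d` is the Euclidean space `ℝ^d`. -/
abbrev E (d : ℕ) : Type := EuclideanSpace ℝ (Fin d)

/-- A sample `X` of `n` points in `ℝ^d` is in general position if no affine hyperplane
(encoded as `{x | ⟪v, x⟫ = c}` for some `v ≠ 0`) contains more than `d` of the points. -/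
def inGeneralPosition {d n : ℕ} (X : Fin n → E d) : Prop :=
  ∀ v : E d, v ≠ 0 → ∀ c : ℝ, ({i : Fin n | ⟪v, X i⟫ = c} : Set (Fin n)).ncard ≤ d

/-- Number of sample points in the closed halfspace `{z | ⟪u, z⟫ ≤ ⟪u, x⟫}`. -/
def sideCount {d n : ℕ} (X : Fin n → E d) (u x : E d) : ℕ :=
  ({i : Fin n | ⟪u, X i⟫ ≤ ⟪u, x⟫} : Set (Fin n)).ncard

/-- Tukey's halfspace depth of `x` with respect to the sample `X`. -/
def depth {d n : ℕ} (X : Fin n → E d) (x : E d) : ℝ :=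
  sInf {r : ℝ | ∃ u : E d, ‖u‖ = 1 ∧ r = (sideCount X u x : ℝ) / (n : ℝ)}

/-- The maximum Tukey depth `λ*` of the sample `X`. -/
def maxDepth {d n : ℕ} (X : Fin n → E d) : ℝ :=
  sSup (Set.range (depth X))

/-- The set `M(X)` of deepest points. -/
def MSet {d n : ℕ} (X : Fin n → E d) : Set (E d) :=
  {x | depth X x = maxDepth X}

/-- `U_x`: the set of optimal (unit) directions realizing the depth at `x`. -/
def USet {d n : ℕ} (X : Fin n → E d) (x : E d) : Set (E d) :=
  {u | ‖u‖ = 1 ∧ (sideCount X u x : ℝ) / (n : ℝ) = depth X x}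

/-- `H_{x,y}`: the open hemisphere of unit directions `u` with `⟪u, x⟫ < ⟪u, y⟫`. -/
def HSet {d : ℕ} (x y : E d) : Set (E d) :=
  {u | ‖u‖ = 1 ∧ ⟪u, x⟫ < ⟪u, y⟫}

/-- `B_z`. -/
def BSet {d n : ℕ} (X : Fin n → E d) (z : E d) : Set (E d) :=
  {x | x ∈ MSet X ∧ USet X x ∩ HSet x z = ∅}

/-- `B̃_z = B_z \ {z}`. -/
def BTilde {d n : ℕ} (X : Fin n → E d) (z : E d) : Set (E d) :=
  BSet X z \ {z}

/-- `v` is a unit vector normal to an affine hyperplane spanned by `d` of the sample points. -/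
def normalToSampleHyperplane {d n : ℕ} (X : Fin n → E d) (v : E d) : Prop :=
  ‖v‖ = 1 ∧ ∃ (s : Finset (Fin n)) (c : ℝ), s.card = d ∧
    (affineSpan ℝ (X '' (s : Set (Fin n))) : Set (E d)) = {x : E d | ⟪v, x⟫ = c}

/-- Condition (2.1) on a unit direction `u`. -/
def cond21 {d n : ℕ} (X : Fin n → E d) (u : E d) : Prop :=
  ∀ v : E d, normalToSampleHyperplane X v → ⟪u, v⟫ ≠ 0

/-- `A` represents the columns of a `d × (d-1)` matrix which together with the unit
vector `u` form an orthonormal basis of `ℝ^d`. -/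
def IsAu {d : ℕ} (u : E d) (A : Fin (d - 1) → E d) : Prop :=
  ‖u‖ = 1 ∧ Orthonormal ℝ A ∧ ∀ j, ⟪A j, u⟫ = 0

/-- The `A_u`-projection `A_u^T x ∈ ℝ^{d-1}` of a point `x ∈ ℝ^d`. -/
def proj {d : ℕ} (A : Fin (d - 1) → E d) (x : E d) : E (d - 1) :=
  (WithLp.equiv 2 (Fin (d - 1) → ℝ)).symm (fun j => ⟪A j, x⟫)

/-- The embedding `A_u x = ∑ j x_j A_j ∈ ℝ^d` of a point `x ∈ ℝ^{d-1}`. -/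
def embed {d : ℕ} (A : Fin (d - 1) → E d) (x : E (d - 1)) : E d :=
  ∑ j, x j • A j

/-- `λ₀ = inf_{u ∈ S^{d-1}} λ*(X_u^n)`, the infimum over all directions of the maximum
Tukey depth of the projected sample. -/
def lambda0 {d n : ℕ} (X : Fin n → E d) : ℝ :=
  sInf {r : ℝ | ∃ (u : E d) (A : Fin (d - 1) → E d),
    IsAu u A ∧ r = maxDepth (fun i => proj A (X i))}

/-- The average (barycenter) of a set `K ⊆ ℝ^d`, taken with respect to the Hausdorff
measure of dimension equal to the affine dimension of `K`. -/
def setAverage {d : ℕ} (K : Set (E d)) : E d :=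
  (μH[(Module.finrank ℝ (affineSpan ℝ K).direction : ℝ)] K).toReal⁻¹ •
    ∫ x in K, x ∂(μH[(Module.finrank ℝ (affineSpan ℝ K).direction : ℝ)])

/-- Tukey's halfspace median: the average of all deepest points. -/
def TukeyMedian {d n : ℕ} (X : Fin n → E d) : E d :=
  setAverage (MSet X)

/-- `m` contaminating points suffice to break down the Tukey median at `X`. -/
def breaksDown {d n : ℕ} (X : Fin n → E d) (m : ℕ) : Prop :=
  ∀ C : ℝ, ∃ Y : Fin m → E d, C < ‖TukeyMedian (Fin.append X Y) - TukeyMedian X‖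

/-- The finite sample (additional) breakdown point of the Tukey median at `X`. -/
def FSBP {d n : ℕ} (X : Fin n → E d) : ℝ :=
  sInf {r : ℝ | ∃ m : ℕ, 1 ≤ m ∧ breaksDown X m ∧ r = (m : ℝ) / ((n : ℝ) + (m : ℝ))}

/-! ### Basic facts on counts and depth -/

lemma sideCount_mono {d n : ℕ} (Z : Fin n → E d) (u x y : E d)
    (h : ∀ i, ⟪u, Z i⟫ ≤ ⟪u, x⟫ → ⟪u, Z i⟫ ≤ ⟪u, y⟫) : sideCount Z u x ≤ sideCount Z u y :=
  Set.ncard_le_ncard (fun i hi => h i hi) (Set.toFinite _)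

lemma sideCount_le {d n : ℕ} (Z : Fin n → E d) (u x : E d) : sideCount Z u x ≤ n := by
  have := Set.ncard_le_ncard (Set.subset_univ {i : Fin n | ⟪u, Z i⟫ ≤ ⟪u, x⟫}) (Set.toFinite _)
  simpa [sideCount] using this

lemma sideCount_smul {d n : ℕ} (Z : Fin n → E d) (u x : E d) {c : ℝ} (hc : 0 < c) :
    sideCount Z (c • u) x = sideCount Z u x := by
  unfold sideCount
  congr 1
  ext i
  simp only [Set.mem_ofPred_eq, real_inner_smul_left]
  exact mul_le_mul_iff_right₀ hc

lemma exists_unit_of_ne {d n : ℕ} (Z : Fin n → E d) (u x : E d) (hu : u ≠ 0) :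
    ∃ v : E d, ‖v‖ = 1 ∧ sideCount Z v x = sideCount Z u x :=
  ⟨‖u‖⁻¹ • u, norm_smul_inv_norm hu, sideCount_smul Z u x (inv_pos.2 (norm_pos_iff.2 hu))⟩

lemma depth_le {d n : ℕ} (Z : Fin n → E d) (u x : E d) (hu : ‖u‖ = 1) :
    depth Z x ≤ (sideCount Z u x : ℝ) / n := by
  apply csInf_le
  · refine ⟨0, ?_⟩
    rintro r ⟨v, -, rfl⟩
    positivity
  · exact ⟨u, hu, rfl⟩

lemma exists_unit : ∃ u : E 2, ‖u‖ = 1 := exists_norm_eq (E 2) zero_le_one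

lemma le_depth {n : ℕ} (Z : Fin n → E 2) (x : E 2) (k : ℕ)
    (h : ∀ u : E 2, ‖u‖ = 1 → k ≤ sideCount Z u x) : (k : ℝ) / n ≤ depth Z x := by
  apply le_csInf
  · obtain ⟨u, hu⟩ := exists_unit
    exact ⟨_, u, hu, rfl⟩
  · rintro r ⟨u, hu, rfl⟩
    have : (k : ℝ) ≤ sideCount Z u x := by exact_mod_cast h u hu
    gcongr

lemma depth_le_maxDepth {n : ℕ} (Z : Fin n → E 2) (x : E 2) : depth Z x ≤ maxDepth Z := by
  apply le_csSup
  · refine ⟨1, ?_⟩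
    rintro r ⟨y, rfl⟩
    obtain ⟨u, hu⟩ := exists_unit
    refine (depth_le Z u y hu).trans ?_
    apply div_le_one_of_le₀
    · exact_mod_cast sideCount_le Z u y
    · positivity
  · exact ⟨x, rfl⟩

lemma MSet_eq {n m : ℕ} (hn : 0 < n) (Z : Fin n → E 2) (y : E 2)
    (hy : ∀ u : E 2, ‖u‖ = 1 → m ≤ sideCount Z u y)
    (hx : ∀ x : E 2, ∃ u : E 2, ‖u‖ = 1 ∧ sideCount Z u x ≤ m) :
    MSet Z = {x | ∀ u : E 2, ‖u‖ = 1 → m ≤ sideCount Z u x} := by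
  have hn' : (0 : ℝ) < n := by exact_mod_cast hn
  have hle : ∀ x, depth Z x ≤ (m : ℝ) / n := by
    intro x
    obtain ⟨u, hu, h⟩ := hx x
    refine (depth_le Z u x hu).trans ?_
    have : (sideCount Z u x : ℝ) ≤ m := by exact_mod_cast h
    gcongr
  have hmax : maxDepth Z = (m : ℝ) / n := by
    apply le_antisymm
    · apply csSup_le (Set.range_nonempty _)
      rintro r ⟨x, rfl⟩
      exact hle x
    · exact (le_depth Z y m hy).trans (depth_le_maxDepth Z y)
  ext x
  simp only [MSet, Set.mem_ofPred_eq, hmax]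
  constructor
  · intro h u hu
    have h1 := depth_le Z u x hu
    rw [h, div_le_div_iff_of_pos_right hn'] at h1
    exact_mod_cast h1
  · intro h
    exact le_antisymm (hle x) (le_depth Z x m h)

lemma convex_deep {n : ℕ} (Z : Fin n → E 2) (m : ℕ) :
    Convex ℝ {x | ∀ u : E 2, ‖u‖ = 1 → m ≤ sideCount Z u x} := by
  intro x hx y hy a b ha hb hab u hu
  have e : ⟪u, a • x + b • y⟫ = a * ⟪u, x⟫ + b * ⟪u, y⟫ := by
    rw [inner_add_right, real_inner_smul_right, real_inner_smul_right]
  rcases le_total ⟪u, x⟫ ⟪u, y⟫ with h | h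
  · refine (hx u hu).trans (sideCount_mono Z u _ _ fun i hi => hi.trans ?_)
    rw [e]
    have hb' : a = 1 - b := by linarith
    subst hb'
    nlinarith
  · refine (hy u hu).trans (sideCount_mono Z u _ _ fun i hi => hi.trans ?_)
    rw [e]
    have hb' : b = 1 - a := by linarith
    subst hb'
    nlinarith

lemma closed_deep {n : ℕ} (Z : Fin n → E 2) (m : ℕ) :
    IsClosed {x | ∀ u : E 2, ‖u‖ = 1 → m ≤ sideCount Z u x} := by
  have : {x | ∀ u : E 2, ‖u‖ = 1 → m ≤ sideCount Z u x}
      = ⋂ u : E 2, ⋂ _ : ‖u‖ = 1, {x | m ≤ sideCount Z u x} := by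
    ext x; simp
  rw [this]
  refine isClosed_iInter fun u => isClosed_iInter fun hu => ?_
  rw [← isOpen_compl_iff, isOpen_iff_mem_nhds]
  intro x hx
  simp only [Set.mem_compl_iff, Set.mem_ofPred_eq, not_le] at hx
  have hev : ∀ᶠ y in nhds x, ∀ i, ⟪u, x⟫ < ⟪u, Z i⟫ → ⟪u, y⟫ < ⟪u, Z i⟫ := by
    rw [Filter.eventually_all]
    intro i
    by_cases h : ⟪u, x⟫ < ⟪u, Z i⟫
    · have hc : Continuous fun y : E 2 => ⟪u, y⟫ := by fun_prop
      filter_upwards [hc.continuousAt.eventually_lt_const h] with y hy _ using hy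
    · exact Filter.Eventually.of_forall fun y hy => absurd hy h
  filter_upwards [hev] with y hy
  simp only [Set.mem_compl_iff, Set.mem_ofPred_eq, not_le]
  refine lt_of_le_of_lt (sideCount_mono Z u y x fun i hi => ?_) hx
  by_contra hcon
  exact absurd (hy i (not_le.1 hcon)) (not_lt.2 hi)

lemma exists_mem_of_deep {n m : ℕ} (hm : 1 ≤ m) (Z : Fin n → E 2) (u x : E 2)
    (h : m ≤ sideCount Z u x) : ∃ i, ⟪u, Z i⟫ ≤ ⟪u, x⟫ := by
  by_contra hcon
  push Not at hcon
  have : sideCount Z u x = 0 := by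
    unfold sideCount
    rw [Set.ncard_eq_zero (Set.toFinite _)]
    ext i
    simpa using hcon i
  omega

lemma norm_le_of_deep {n m : ℕ} (hm : 1 ≤ m) (Z : Fin n → E 2) (R : ℝ) (hR : 0 ≤ R)
    (hZ : ∀ i, ‖Z i‖ ≤ R) (x : E 2) (hx : ∀ u : E 2, ‖u‖ = 1 → m ≤ sideCount Z u x) :
    ‖x‖ ≤ R := by
  by_cases h0 : x = 0
  · simpa [h0] using hR
  have hpos : 0 < ‖x‖ := norm_pos_iff.2 h0
  have hu : ‖-(‖x‖⁻¹ • x)‖ = 1 := by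
    rw [norm_neg]; exact norm_smul_inv_norm h0
  obtain ⟨i, hi⟩ := exists_mem_of_deep hm Z _ x (hx _ hu)
  have h1 : ⟪-(‖x‖⁻¹ • x), x⟫ = -‖x‖ := by
    rw [inner_neg_left, real_inner_smul_left, real_inner_self_eq_norm_sq]
    field_simp
  have h2 := abs_real_inner_le_norm (-(‖x‖⁻¹ • x)) (Z i)
  rw [hu, one_mul] at h2
  have := (abs_le.1 h2).1
  have := hZ i
  linarith

/-! ### Centerpoint theorem -/

lemma centerpoint {N : ℕ} (hN : 0 < N) (Z : Fin N → E 2) :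
    ∃ x : E 2, ∀ u : E 2, N ≤ 3 * sideCount Z u x := by
  classical
  let s : Finset (Finset (Fin N)) := Finset.univ.filter fun S => 2 * N < 3 * S.card
  have key : (⋂ S ∈ s, convexHull ℝ (Z '' (S : Set (Fin N)))).Nonempty := by
    apply Convex.helly_theorem' (𝕜 := ℝ)
    · intro i _
      exact convex_convexHull ℝ _
    · intro I hI hcard
      have hfr : Module.finrank ℝ (E 2) = 2 := by simp
      rw [hfr] at hcard
      have hU : (I.biUnion fun S => Sᶜ).card < N := by
        by_cases hIe : I = ∅
        · simpa [hIe] using hN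
        have h1 : (I.biUnion fun S => Sᶜ).card ≤ ∑ S ∈ I, (Sᶜ).card := Finset.card_biUnion_le
        have h2 : ∑ S ∈ I, 3 * (Sᶜ).card < ∑ S ∈ I, N := by
          apply Finset.sum_lt_sum_of_nonempty (Finset.nonempty_iff_ne_empty.2 hIe)
          intro S hS
          have h3 : 2 * N < 3 * S.card := by simpa [s] using hI hS
          rw [Finset.card_compl, Fintype.card_fin]
          omega
        rw [← Finset.mul_sum, Finset.sum_const, smul_eq_mul] at h2
        have : I.card * N ≤ 3 * N := Nat.mul_le_mul_right _ hcard
        omega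
      have : ∃ i, i ∉ I.biUnion fun S => Sᶜ := by
        by_contra hcon
        push Not at hcon
        have : (I.biUnion fun S => Sᶜ) = Finset.univ := Finset.eq_univ_of_forall hcon
        rw [this] at hU
        simp at hU
      obtain ⟨i, hi⟩ := this
      simp only [Finset.mem_biUnion, Finset.mem_compl, not_exists, not_and, not_not] at hi
      refine ⟨Z i, ?_⟩
      simp only [Set.mem_iInter]
      intro S hS
      exact subset_convexHull ℝ _ ⟨i, hi S hS, rfl⟩
  obtain ⟨x, hx⟩ := key
  refine ⟨x, fun u => ?_⟩
  by_contra hcon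
  push Not at hcon
  let T : Finset (Fin N) := Finset.univ.filter fun i => ⟪u, Z i⟫ ≤ ⟪u, x⟫
  have hT : sideCount Z u x = T.card := by
    unfold sideCount
    rw [← Set.ncard_coe_finset]
    congr 1
    ext i; simp [T]
  have hTs : Tᶜ ∈ s := by
    have := Finset.card_le_univ T
    simp only [s, Finset.mem_filter, Finset.mem_univ, true_and, Finset.card_compl,
      Fintype.card_fin] at this ⊢
    omega
  simp only [Set.mem_iInter] at hx
  have hxT := hx _ hTs
  have hsub : convexHull ℝ (Z '' ((Tᶜ : Finset (Fin N)) : Set (Fin N))) ⊆ {z | ⟪u, x⟫ < ⟪u, z⟫} := by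
    apply convexHull_min
    · rintro _ ⟨i, hi, rfl⟩
      simpa [T] using hi
    · exact convex_halfSpace_gt (f := fun z => ⟪u, z⟫)
        ⟨fun a b => inner_add_right _ _ _, fun a b => real_inner_smul_right _ _ _⟩ _
  simpa using hsub hxT

/-! ### Barycenters -/

lemma norm_setAverage_le (K : Set (E 2)) (R : ℝ) (hR : 0 ≤ R) (hK : ∀ x ∈ K, ‖x‖ ≤ R) :
    ‖setAverage K‖ ≤ R := by
  unfold setAverage
  set μ : Measure (E 2) := μH[(Module.finrank ℝ (affineSpan ℝ K).direction : ℝ)] with hμ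
  by_cases h0 : (μ K).toReal = 0
  · rw [h0]; simpa using hR
  have htop : μ K < ⊤ := by
    rw [lt_top_iff_ne_top]
    intro h
    exact h0 (by simp [h])
  have hpos : 0 < (μ K).toReal := lt_of_le_of_ne ENNReal.toReal_nonneg (Ne.symm h0)
  have h1 := norm_setIntegral_le_of_norm_le_const (μ := μ) (f := fun x : E 2 => x) htop hK
  rw [norm_smul, norm_inv, Real.norm_of_nonneg hpos.le, inv_mul_le_iff₀ hpos, mul_comm]
  exact h1

lemma hausdorff_convex (K : Set (E 2)) (hc : Convex ℝ K) (hK : IsCompact K) (hne : K.Nonempty) :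
    0 < μH[(Module.finrank ℝ (affineSpan ℝ K).direction : ℝ)] K ∧
      μH[(Module.finrank ℝ (affineSpan ℝ K).direction : ℝ)] K < ⊤ := by
  obtain ⟨q, hq⟩ := (intrinsicInterior_nonempty hc).2 hne
  obtain ⟨p, hp, rfl⟩ := mem_intrinsicInterior.1 hq
  have : Nonempty (affineSpan ℝ K) := ⟨p⟩
  set V := (affineSpan ℝ K).direction with hV
  let φ : V → affineSpan ℝ K := IsometryEquiv.vaddConst p
  have hφ : Isometry φ := (IsometryEquiv.vaddConst p).isometry
  let ψ : V → E 2 := fun v => (φ v : E 2)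
  have hψ : Isometry ψ := isometry_subtype_coe.comp hφ
  have hsurj : Function.Surjective φ := (IsometryEquiv.vaddConst p).surjective
  have himg : ψ '' (ψ ⁻¹' K) = K := by
    apply Set.image_preimage_eq_of_subset
    intro x hx
    obtain ⟨v, hv⟩ := hsurj ⟨x, subset_affineSpan ℝ K hx⟩
    exact ⟨v, by simp [ψ, hv]⟩
  have hmeas : μH[(Module.finrank ℝ V : ℝ)] K = μH[(Module.finrank ℝ V : ℝ)] (ψ ⁻¹' K) := by
    conv_lhs => rw [← himg]
    exact hψ.hausdorffMeasure_image (Or.inl (by positivity)) _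
  rw [hmeas]
  constructor
  · apply Measure.measure_pos_of_nonempty_interior
    have h0 : φ 0 = p := by simp [φ]
    refine ⟨0, ?_⟩
    have : φ ⁻¹' interior ((↑) ⁻¹' K : Set (affineSpan ℝ K)) ⊆ interior (ψ ⁻¹' K) := by
      exact preimage_interior_subset_interior_preimage hφ.continuous
    apply this
    simpa [h0] using hp
  · apply IsCompact.measure_lt_top
    exact hψ.isClosedEmbedding.isCompact_preimage hK

lemma inner_setAverage_ge (K : Set (E 2)) (hc : Convex ℝ K) (hK : IsCompact K) (y e : E 2)
    (hy : y ∈ K) (R : ℝ) (hR : ∀ x ∈ K, -R ≤ ⟪e, x⟫) :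
    -R + (⟪e, y⟫ + R) / 8 ≤ ⟪e, setAverage K⟫ := by
  obtain ⟨hpos, hfin⟩ := hausdorff_convex K hc hK ⟨y, hy⟩
  unfold setAverage
  set d := Module.finrank ℝ (affineSpan ℝ K).direction with hd
  have hd2 : d ≤ 2 := by
    have := Submodule.finrank_le (affineSpan ℝ K).direction
    simpa using this
  set μ : Measure (E 2) := μH[(d : ℝ)] with hμ
  have hr : 0 < (μ K).toReal := ENNReal.toReal_pos hpos.ne' hfin.ne
  have hmK : MeasurableSet K := hK.measurableSet
  have : IsFiniteMeasure (μ.restrict K) := ⟨by simpa using hfin⟩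
  obtain ⟨B, hB⟩ := hK.isBounded.exists_norm_le
  have hInt : IntegrableOn (fun x : E 2 => x) K μ := by
    apply Integrable.of_bound (C := B) (by fun_prop)
    filter_upwards [ae_restrict_mem hmK] with x hx using hB x hx
  have hInt2 : IntegrableOn (fun x : E 2 => ⟪e, x⟫) K μ := hInt.const_inner e
  have hInt3 : IntegrableOn (fun x : E 2 => ⟪e, x⟫ + R) K μ := hInt2.add (integrable_const R)
  rw [real_inner_smul_right, ← integral_inner hInt]
  have hsum : ∫ x in K, (⟪e, x⟫ + R) ∂μ = ∫ x in K, ⟪e, x⟫ ∂μ + R * (μ K).toReal := by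
    rw [integral_add hInt2 (integrable_const R)]
    simp [Measure.real, mul_comm]
  set D := AffineMap.homothety y (1 / 2 : ℝ) '' K with hD
  have hDK : D ⊆ K := by
    rintro _ ⟨x, hx, rfl⟩
    rw [AffineMap.homothety_eq_lineMap]
    exact hc.lineMap_mem hy hx ⟨by norm_num, by norm_num⟩
  have hDm : MeasurableSet D :=
    (hK.image (AffineMap.homothety_continuous y (1 / 2 : ℝ))).measurableSet
  have hDμ : μ.real D = (1 / 2 : ℝ) ^ d * (μ K).toReal := by
    rw [Measure.real, hD, hμ, hausdorffMeasure_homothety_image (by positivity) y (by norm_num)]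
    simp [ENNReal.smul_def]
  have h1 : ∫ x in D, (⟪e, x⟫ + R) ∂μ ≤ ∫ x in K, (⟪e, x⟫ + R) ∂μ := by
    apply setIntegral_mono_set hInt3
    · filter_upwards [ae_restrict_mem hmK] with x hx
      have := hR x hx
      simp only [Pi.zero_apply]
      linarith
    · exact Filter.Eventually.of_forall hDK
  have h2 : (⟪e, y⟫ + R) / 2 * μ.real D ≤ ∫ x in D, (⟪e, x⟫ + R) ∂μ := by
    apply setIntegral_ge_of_const_le_real hDm
    · exact ((measure_mono hDK).trans_lt hfin).ne
    · rintro _ ⟨x, hx, rfl⟩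
      have := hR x hx
      rw [AffineMap.homothety_apply]
      simp only [vsub_eq_sub, vadd_eq_add, inner_add_right, real_inner_smul_right, inner_sub_right]
      linarith
    · exact hInt3.mono_set hDK
  have h3 : (1 / 4 : ℝ) ≤ (1 / 2 : ℝ) ^ d := by
    calc (1 / 4 : ℝ) = (1 / 2) ^ 2 := by norm_num
      _ ≤ _ := pow_le_pow_of_le_one (by norm_num) (by norm_num) hd2
  have hyR : 0 ≤ ⟪e, y⟫ + R := by have := hR y hy; linarith
  rw [hDμ] at h2
  have h4 : (⟪e, y⟫ + R) / 2 * (1 / 4 * (μ K).toReal)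
      ≤ (⟪e, y⟫ + R) / 2 * ((1 / 2 : ℝ) ^ d * (μ K).toReal) := by gcongr
  rw [le_inv_mul_iff₀ hr]
  nlinarith

/-! ### Contaminated samples -/

open Classical in
lemma sideCount_eq_sum {d n : ℕ} (Z : Fin n → E d) (u x : E d) :
    sideCount Z u x = ∑ i, if ⟪u, Z i⟫ ≤ ⟪u, x⟫ then 1 else 0 := by
  unfold sideCount
  rw [← Finset.card_filter, ← Set.ncard_coe_finset]
  congr 1
  ext i; simp

lemma sideCount_append {d n m : ℕ} (X : Fin n → E d) (Y : Fin m → E d) (u x : E d) :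
    sideCount (Fin.append X Y) u x = sideCount X u x + sideCount Y u x := by
  simp only [sideCount_eq_sum, Fin.sum_univ_add, Fin.append_left, Fin.append_right]

lemma exists_bound {n : ℕ} (X : Fin n → E 2) : ∃ R : ℝ, 0 ≤ R ∧ ∀ i, ‖X i‖ ≤ R := by
  refine ⟨∑ i, ‖X i‖, Finset.sum_nonneg fun i _ => norm_nonneg _, fun i => ?_⟩
  exact Finset.single_le_sum (f := fun i => ‖X i‖) (fun i _ => norm_nonneg _) (Finset.mem_univ i)

/-- Fewer than `n / 2` contaminating points do not break down the median. -/
lemma not_breaksDown {n m : ℕ} (h : 2 * m < n) (X : Fin n → E 2) : ¬ breaksDown X m := by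
  intro hb
  obtain ⟨R, hR0, hR⟩ := exists_bound X
  obtain ⟨Y, hY⟩ := hb (R + ‖TukeyMedian X‖)
  have hle : ‖TukeyMedian (Fin.append X Y)‖ ≤ R := by
    apply norm_setAverage_le _ R hR0
    intro x hx
    by_contra hcon
    push Not at hcon
    have hxpos : 0 < ‖x‖ := lt_of_le_of_lt hR0 hcon
    have h0 : x ≠ 0 := norm_pos_iff.1 hxpos
    have hu : ‖-(‖x‖⁻¹ • x)‖ = 1 := by
      rw [norm_neg]; exact norm_smul_inv_norm h0
    have h1 : ⟪-(‖x‖⁻¹ • x), x⟫ = -‖x‖ := by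
      rw [inner_neg_left, real_inner_smul_left, real_inner_self_eq_norm_sq]
      field_simp
    have hX0 : sideCount X (-(‖x‖⁻¹ • x)) x = 0 := by
      by_contra hne
      obtain ⟨i, hi⟩ := exists_mem_of_deep (m := 1) le_rfl X _ x (Nat.one_le_iff_ne_zero.2 hne)
      have h2 := abs_real_inner_le_norm (-(‖x‖⁻¹ • x)) (X i)
      rw [hu, one_mul] at h2
      have := (abs_le.1 h2).1
      have := hR i
      linarith
    have hd : depth (Fin.append X Y) x ≤ (m : ℝ) / (n + m : ℕ) := by
      refine (depth_le _ _ x hu).trans ?_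
      have : sideCount (Fin.append X Y) (-(‖x‖⁻¹ • x)) x ≤ m := by
        rw [sideCount_append, hX0, zero_add]
        exact sideCount_le _ _ _
      have : (sideCount (Fin.append X Y) (-(‖x‖⁻¹ • x)) x : ℝ) ≤ m := by exact_mod_cast this
      gcongr
    obtain ⟨c, hc⟩ := centerpoint (by omega) (Fin.append X Y)
    have hdc : ((m + 1 : ℕ) : ℝ) / (n + m : ℕ) ≤ depth (Fin.append X Y) c := by
      apply le_depth
      intro u _
      have := hc u
      omega
    have hmx := depth_le_maxDepth (Fin.append X Y) c
    have hxe : depth (Fin.append X Y) x = maxDepth (Fin.append X Y) := hx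
    have hlt : (m : ℝ) / (n + m : ℕ) < ((m + 1 : ℕ) : ℝ) / (n + m : ℕ) := by
      have : (0 : ℝ) < (n + m : ℕ) := by exact_mod_cast (by omega : 0 < n + m)
      gcongr
      omega
    linarith
  have := norm_sub_le (TukeyMedian (Fin.append X Y)) (TukeyMedian X)
  linarith

lemma inner_two (a b : E 2) : ⟪a, b⟫ = a 0 * b 0 + a 1 * b 1 := by
  simp [PiLp.inner_apply, Fin.sum_univ_two, mul_comm]

lemma injective_of_igp {n : ℕ} (hn : 3 ≤ n) (X : Fin n → E 2) (hX : inGeneralPosition X) :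
    Function.Injective X := by
  intro i j hij
  by_contra hne
  have hk : ∃ k, k ∉ ({i, j} : Finset (Fin n)) := by
    by_contra hcon
    push Not at hcon
    have h1 : ({i, j} : Finset (Fin n)) = Finset.univ := Finset.eq_univ_of_forall hcon
    have h2 : ({i, j} : Finset (Fin n)).card ≤ 2 := Finset.card_le_two
    rw [h1] at h2
    simp at h2
    omega
  obtain ⟨k, hk⟩ := hk
  simp only [Finset.mem_insert, Finset.mem_singleton, not_or] at hk
  have hv : ∃ v : E 2, v ≠ 0 ∧ ⟪v, X k⟫ = ⟪v, X i⟫ := by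
    by_cases h : X k = X i
    · obtain ⟨u, hu⟩ := exists_unit
      exact ⟨u, fun h0 => by simp [h0] at hu, by rw [h]⟩
    · refine ⟨!₂[-(X k 1 - X i 1), X k 0 - X i 0], ?_, ?_⟩
      · intro h0
        apply h
        have e0 := congrArg (fun w : E 2 => w 0) h0
        have e1 := congrArg (fun w : E 2 => w 1) h0
        simp at e0 e1
        ext t
        fin_cases t
        · simp; linarith
        · simp; linarith
      · simp [inner_two]; ring
  obtain ⟨v, hv0, hv⟩ := hv
  have h1 := hX v hv0 ⟪v, X i⟫
  have h2 : (({i, j, k} : Finset (Fin n)) : Set (Fin n)).ncard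
      ≤ ({l : Fin n | ⟪v, X l⟫ = ⟪v, X i⟫} : Set (Fin n)).ncard := by
    apply Set.ncard_le_ncard _ (Set.toFinite _)
    intro l hl
    simp only [Finset.coe_insert, Finset.coe_singleton, Set.mem_insert_iff,
      Set.mem_singleton_iff] at hl
    rcases hl with rfl | rfl | rfl
    · rfl
    · simp [hij]
    · simpa using hv
  rw [Set.ncard_coe_finset, Finset.card_eq_three.2
    ⟨i, j, k, hne, fun h => hk.1 h.symm, fun h => hk.2 h.symm, rfl⟩] at h2
  omega

/-- There are points arbitrarily far away lying on no line through two sample points. -/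
lemma exists_far {n : ℕ} (X : Fin n → E 2) (hX : Function.Injective X) (C : ℝ) :
    ∃ y : E 2, C < ‖y‖ ∧ ∀ p : E 2, p ≠ 0 → ∀ k l, ⟪p, X k⟫ = ⟪p, y⟫ → ⟪p, X l⟫ = ⟪p, y⟫ →
      k = l := by
  classical
  let P : Fin n → Fin n → Polynomial ℝ := fun k l =>
    Polynomial.C (X l 0 - X k 0) * (Polynomial.X ^ 2 - Polynomial.C (X k 1))
      - Polynomial.C (X l 1 - X k 1) * (Polynomial.X - Polynomial.C (X k 0))
  have hP : ∀ k l, k ≠ l → P k l ≠ 0 := by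
    intro k l hkl h0
    have c2 := congrArg (fun q : Polynomial ℝ => q.eval (X k 0 + 1) + q.eval (X k 0 - 1)
      - 2 * q.eval (X k 0)) h0
    have c1 := congrArg (fun q : Polynomial ℝ => q.eval (X k 0 + 1) - q.eval (X k 0)) h0
    simp [P] at c1 c2
    have e0 : X l 0 = X k 0 := by linarith
    have e1 : X l 1 = X k 1 := by
      rw [e0] at c1
      linarith
    apply hkl
    apply hX
    ext t
    fin_cases t
    · simp [e0]
    · simp [e1]
  let F : Finset ℝ := Finset.univ.biUnion fun k => Finset.univ.biUnion fun l => (P k l).roots.toFinset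
  obtain ⟨t, ht, htF⟩ := (Set.Ioi_infinite (max C 0)).exists_notMem_finset F
  have htC : C < t := lt_of_le_of_lt (le_max_left _ _) ht
  have ht0 : 0 < t := lt_of_le_of_lt (le_max_right _ _) ht
  refine ⟨!₂[t, t ^ 2], ?_, ?_⟩
  · refine htC.trans_le ?_
    have := PiLp.norm_apply_le (p := 2) (!₂[t, t ^ 2] : E 2) 0
    simp only [Real.norm_eq_abs] at this
    exact (le_abs_self t).trans (by simpa using this)
  · intro p hp k l hk hl
    by_contra hkl
    have hev : (P k l).eval t ≠ 0 := by
      intro h0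
      apply htF
      simp only [F, Finset.mem_biUnion, Finset.mem_univ, true_and, Multiset.mem_toFinset]
      exact ⟨k, l, (Polynomial.mem_roots (hP k l hkl)).2 h0⟩
    simp [inner_two] at hk hl
    simp [P] at hev
    have d0 : p 0 * ((X l 0 - X k 0) * (t ^ 2 - X k 1) - (X l 1 - X k 1) * (t - X k 0)) = 0 := by
      linear_combination (t^2 - X k 1) * (hl - hk) - (X l 1 - X k 1) * (-hk)
    have d1 : p 1 * ((X l 0 - X k 0) * (t ^ 2 - X k 1) - (X l 1 - X k 1) * (t - X k 0)) = 0 := by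
      linear_combination (X l 0 - X k 0) * (-hk) - (t - X k 0) * (hl - hk)
    apply hp
    have e0 := (mul_eq_zero.1 d0).resolve_right hev
    have e1 := (mul_eq_zero.1 d1).resolve_right hev
    ext s
    fin_cases s
    · simpa using e0
    · simpa using e1

/-- Every point has depth at most `m / (n + m)` in the contaminated sample. -/
lemma exists_shallow {n m : ℕ} (hm : n + 1 ≤ 2 * m + 1) (X : Fin n → E 2) (y : E 2)
    (hfar : ∀ i, ‖X i‖ < ‖y‖) (hy0 : 0 < ‖y‖)
    (hy : ∀ p : E 2, p ≠ 0 → ∀ k l, ⟪p, X k⟫ = ⟪p, y⟫ → ⟪p, X l⟫ = ⟪p, y⟫ → k = l) (x : E 2) :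
    ∃ u : E 2, ‖u‖ = 1 ∧ sideCount (Fin.append X (fun _ : Fin m => y)) u x ≤ m := by
  suffices h : ∃ u : E 2, u ≠ 0 ∧ sideCount (Fin.append X (fun _ : Fin m => y)) u x ≤ m by
    obtain ⟨u, hu, h⟩ := h
    obtain ⟨v, hv, hvu⟩ := exists_unit_of_ne (Fin.append X (fun _ : Fin m => y)) u x hu
    exact ⟨v, hv, hvu ▸ h⟩
  by_cases hxy : x = y
  · subst hxy
    refine ⟨-x, neg_ne_zero.2 (norm_pos_iff.1 hy0), ?_⟩
    rw [sideCount_append]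
    have : sideCount X (-x) x = 0 := by
      by_contra hne
      obtain ⟨i, hi⟩ := exists_mem_of_deep (m := 1) le_rfl X _ x (Nat.one_le_iff_ne_zero.2 hne)
      rw [inner_neg_left, inner_neg_left, real_inner_self_eq_norm_sq] at hi
      have h1 := real_inner_le_norm x (X i)
      have h2 := hfar i
      nlinarith
    rw [this, zero_add]
    exact sideCount_le _ _ _
  · -- a normal to the line through `x` and `y`
    let p : E 2 := !₂[-(y 1 - x 1), y 0 - x 0]
    have hpy : ⟪p, y⟫ = ⟪p, x⟫ := by simp [p, inner_two]; ring
    have hp0 : p ≠ 0 := by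
      intro h0
      apply hxy
      have e0 := congrArg (fun w : E 2 => w 0) h0
      have e1 := congrArg (fun w : E 2 => w 1) h0
      simp [p] at e0 e1
      ext t
      fin_cases t
      · simp; linarith
      · simp; linarith
    have hsum : sideCount X p x + sideCount X (-p) x ≤ n + 1 := by
      unfold sideCount
      rw [← Set.ncard_union_add_ncard_inter _ _ (Set.toFinite _) (Set.toFinite _)]
      apply add_le_add
      · have := Set.ncard_le_ncard (Set.subset_univ ({i : Fin n | ⟪p, X i⟫ ≤ ⟪p, x⟫} ∪
          {i : Fin n | ⟪-p, X i⟫ ≤ ⟪-p, x⟫})) (Set.toFinite _)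
        simpa using this
      · rw [Set.ncard_le_one (Set.toFinite _)]
        intro a ha b hb
        simp only [Set.mem_inter_iff, Set.mem_ofPred_eq, inner_neg_left, neg_le_neg_iff] at ha hb
        apply hy p hp0
        · rw [hpy]; exact le_antisymm ha.1 ha.2
        · rw [hpy]; exact le_antisymm hb.1 hb.2
    have hs : ∃ s : E 2, ⟪s, y⟫ = ⟪s, x⟫ ∧ sideCount X s x ≤ m := by
      by_cases h : sideCount X p x ≤ m
      · exact ⟨p, hpy, h⟩
      · exact ⟨-p, by simp [inner_neg_left, hpy], by omega⟩
    obtain ⟨s, hsy, hs⟩ := hs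
    have hev : ∀ᶠ δ : ℝ in nhdsWithin 0 (Set.Ioi 0), ∀ i, ⟪s, x⟫ < ⟪s, X i⟫ →
        ⟪s + δ • (y - x), x⟫ < ⟪s + δ • (y - x), X i⟫ := by
      rw [Filter.eventually_all]
      intro i
      by_cases h : ⟪s, x⟫ < ⟪s, X i⟫
      · have hc : Continuous fun δ : ℝ =>
          ⟪s + δ • (y - x), X i⟫ - ⟪s + δ • (y - x), x⟫ := by fun_prop
        have h0 : 0 < (fun δ : ℝ => ⟪s + δ • (y - x), X i⟫ - ⟪s + δ • (y - x), x⟫) 0 := by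
          simpa using h
        have := (hc.continuousAt.eventually_const_lt h0).filter_mono
          (nhdsWithin_le_nhds (s := Set.Ioi 0))
        filter_upwards [this] with δ hδ _
        linarith
      · exact Filter.Eventually.of_forall fun δ hδ => absurd hδ h
    obtain ⟨δ, hδ, hδ0⟩ := (hev.and self_mem_nhdsWithin).exists
    have hδ0 : 0 < δ := hδ0
    have hyx : ⟪s + δ • (y - x), x⟫ < ⟪s + δ • (y - x), y⟫ := by
      have h1 : ⟪s + δ • (y - x), y⟫ - ⟪s + δ • (y - x), x⟫ = δ * ‖y - x‖ ^ 2 := by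
        rw [← real_inner_self_eq_norm_sq]
        simp only [inner_add_left, real_inner_smul_left, inner_sub_left, inner_sub_right]
        rw [hsy]; ring
      have h2 : 0 < ‖y - x‖ := norm_pos_iff.2 (sub_ne_zero.2 (Ne.symm hxy))
      have : 0 < δ * ‖y - x‖ ^ 2 := by positivity
      linarith
    refine ⟨s + δ • (y - x), ?_, ?_⟩
    · intro h0
      rw [h0] at hyx
      simp at hyx
    · rw [sideCount_append]
      have hY : sideCount (fun _ : Fin m => y) (s + δ • (y - x)) x = 0 := by
        by_contra hne
        obtain ⟨i, hi⟩ := exists_mem_of_deep (m := 1) le_rfl (fun _ : Fin m => y) _ x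
          (Nat.one_le_iff_ne_zero.2 hne)
        exact absurd hi (not_le.2 hyx)
      rw [hY, add_zero]
      refine le_trans ?_ hs
      unfold sideCount
      apply Set.ncard_le_ncard _ (Set.toFinite _)
      intro i hi
      simp only [Set.mem_ofPred_eq] at hi ⊢
      by_contra hcon
      exact absurd (hδ i (not_le.1 hcon)) (not_lt.2 hi)

/-- At least `n / 2` contaminating points break down the median. -/
lemma breaksDown_of_le {n m : ℕ} (hm1 : 1 ≤ m) (hm : n ≤ 2 * m) (X : Fin n → E 2)
    (hX : Function.Injective X) : breaksDown X m := by
  intro C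
  obtain ⟨R, hR0, hR⟩ := exists_bound X
  obtain ⟨y, hyC, hy⟩ := exists_far X hX (8 * (|C| + ‖TukeyMedian X‖ + R) + R)
  have hT := norm_nonneg (TukeyMedian X)
  have hC0 := abs_nonneg C
  have hyR : R < ‖y‖ := by linarith
  have hy0 : 0 < ‖y‖ := by linarith
  refine ⟨fun _ => y, ?_⟩
  set Z := Fin.append X (fun _ : Fin m => y) with hZ
  have hdeep : ∀ u : E 2, ‖u‖ = 1 → m ≤ sideCount Z u y := by
    intro u _
    rw [hZ, sideCount_append]
    have : sideCount (fun _ : Fin m => y) u y = m := by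
      simp [sideCount_eq_sum]
    omega
  have hM := MSet_eq (m := m) (by omega) Z y hdeep
    (exists_shallow (by omega) X y (fun i => (hR i).trans_lt hyR) hy0 hy)
  have hZn : ∀ i, ‖Z i‖ ≤ ‖y‖ := by
    intro i
    refine Fin.addCases (fun i => ?_) (fun i => ?_) i
    · rw [hZ, Fin.append_left]; exact (hR i).trans hyR.le
    · rw [hZ, Fin.append_right]
  have hcomp : IsCompact (MSet Z) := by
    rw [hM]
    apply Metric.isCompact_of_isClosed_isBounded (closed_deep Z m)
    rw [isBounded_iff_forall_norm_le]
    exact ⟨‖y‖, fun x hx => norm_le_of_deep hm1 Z ‖y‖ hy0.le hZn x hx⟩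
  have hconv : Convex ℝ (MSet Z) := by
    rw [hM]; exact convex_deep Z m
  have hyM : y ∈ MSet Z := by
    rw [hM]; exact hdeep
  let e : E 2 := ‖y‖⁻¹ • y
  have he : ‖e‖ = 1 := norm_smul_inv_norm (norm_pos_iff.1 hy0)
  have hey : ⟪e, y⟫ = ‖y‖ := by
    simp only [e, real_inner_smul_left, real_inner_self_eq_norm_sq]
    field_simp
  have hlow : ∀ x ∈ MSet Z, -R ≤ ⟪e, x⟫ := by
    intro x hx
    rw [hM] at hx
    obtain ⟨i, hi⟩ := exists_mem_of_deep hm1 Z e x (hx e he)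
    refine le_trans ?_ hi
    refine Fin.addCases (fun i => ?_) (fun i => ?_) i
    · rw [hZ, Fin.append_left]
      have h2 := abs_real_inner_le_norm e (X i)
      rw [he, one_mul] at h2
      have := (abs_le.1 h2).1
      have := hR i
      linarith
    · rw [hZ, Fin.append_right, hey]; linarith
  have hbary := inner_setAverage_ge (MSet Z) hconv hcomp y e hyM R hlow
  rw [hey] at hbary
  have h1 : ⟪e, setAverage (MSet Z)⟫ ≤ ‖TukeyMedian Z‖ := by
    have := real_inner_le_norm e (TukeyMedian Z)
    rwa [he, one_mul] at this
  have h2 := norm_sub_norm_le (TukeyMedian Z) (TukeyMedian X)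
  have h3 := le_abs_self C
  linarith

/-- **Remark 3.1.** For a sample in general position in `ℝ²` with `n ≥ 3`,
the finite sample breakdown point of Tukey's halfspace median is
`ε(T*, Xⁿ) = ⌈n/2⌉ / (n + ⌈n/2⌉)`. -/
theorem remark31 {n : ℕ} (hn : 3 ≤ n) (X : Fin n → E 2)
    (hX : inGeneralPosition X) :
    FSBP X = ((⌈(n : ℝ) / 2⌉ : ℝ)) / ((n : ℝ) + (⌈(n : ℝ) / 2⌉ : ℝ)) := by

  have hceil : ⌈(n : ℝ) / 2⌉ = (((n + 1) / 2 : ℕ) : ℤ) := by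
    rw [Int.ceil_eq_iff]
    have h1 : n ≤ 2 * ((n + 1) / 2) := by omega
    have h2 : 2 * ((n + 1) / 2) ≤ n + 1 := by omega
    have h1' : (n : ℝ) ≤ 2 * ((n + 1) / 2 : ℕ) := by exact_mod_cast h1
    have h2' : 2 * (((n + 1) / 2 : ℕ) : ℝ) ≤ n + 1 := by exact_mod_cast h2
    constructor
    · rw [Int.cast_natCast]; linarith
    · rw [Int.cast_natCast]; linarith
  rw [hceil, Int.cast_natCast]
  apply IsLeast.csInf_eq
  constructor
  · exact ⟨(n + 1) / 2, by omega,
      breaksDown_of_le (by omega) (by omega) X (injective_of_igp hn X hX), rfl⟩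
  · rintro r ⟨m, hm, hb, rfl⟩
    have hle : (n + 1) / 2 ≤ m := by
      by_contra hcon
      exact not_breaksDown (by omega) X hb
    have hle' : (((n + 1) / 2 : ℕ) : ℝ) ≤ m := by exact_mod_cast hle
    have hn0 : (0 : ℝ) < n := by exact_mod_cast (by omega : 0 < n)
    rw [div_le_div_iff₀ (by positivity) (by positivity)]
    nlinarith
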